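/- arXiv:2409.13428 — 3 statements merged into one kernel-verified Lean document; each statement's English description precedes it below -/
import Mathlib

section
/- Let E = ℝ^d with the Euclidean inner product and norm, let G : E → E be L-Lipschitz (‖G(z') - G(z'')‖ ≤ L‖z' - z''‖ for all z', z'') and μ-strongly monotone (⟨G(z') - G(z''), z' - z''⟩ ≥ μ‖z' - z''‖² for all z', z''), let γ > 0, and let z, z* ∈ E. Define the extragradient half-step w = z - γ G(z) and full step z⁺ = z - γ G(w). Then ‖z⁺ - z*‖² ≤ ‖z - z*‖² - 2γμ‖w - z*‖² - 2γ⟨G(z*), w - z*⟩ + γ²L²‖z - w‖² - ‖z - w‖². -/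
open InnerProductSpace

/-- Lemma 1 (descent lemma) for one extragradient step, fixed realization. -/
theorem extragradient_descent_lemma
    (d : ℕ) (L μ γ : ℝ) (hγ : 0 < γ)
    (G : EuclideanSpace ℝ (Fin d) → EuclideanSpace ℝ (Fin d))
    (hLip : ∀ z' z'' : EuclideanSpace ℝ (Fin d), ‖G z' - G z''‖ ≤ L * ‖z' - z''‖)
    (hMon : ∀ z' z'' : EuclideanSpace ℝ (Fin d),
      μ * ‖z' - z''‖ ^ 2 ≤ ⟪G z' - G z'', z' - z''⟫_ℝ)
    (z zstar w zplus : EuclideanSpace ℝ (Fin d))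
    (hw : w = z - γ • G z) (hzplus : zplus = z - γ • G w) :
    ‖zplus - zstar‖ ^ 2 ≤
      ‖z - zstar‖ ^ 2 - 2 * γ * μ * ‖w - zstar‖ ^ 2
        - 2 * γ * ⟪G zstar, w - zstar⟫_ℝ
        + γ ^ 2 * L ^ 2 * ‖z - w‖ ^ 2 - ‖z - w‖ ^ 2 := by
  have h1 : z - w = γ • G z := by rw [hw]; abel
  have h2 : z - zstar = (w - zstar) + γ • G z := by rw [hw]; abel
  have h3 : zplus - zstar = (w - zstar) + γ • G z - γ • G w := by rw [hzplus, hw]; abel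
  have hL : ‖G w - G z‖ ^ 2 ≤ L ^ 2 * ‖z - w‖ ^ 2 := by
    have h := hLip w z
    rw [norm_sub_rev w z] at h
    rw [← mul_pow]
    exact pow_le_pow_left₀ (norm_nonneg _) h 2
  have hL' := mul_le_mul_of_nonneg_left hL (sq_nonneg γ)
  have hM := mul_le_mul_of_nonneg_left (hMon w zstar) (by positivity : 0 ≤ 2 * γ)
  have key : ‖zplus - zstar‖ ^ 2 = ‖z - zstar‖ ^ 2 - 2 * γ * ⟪G w, w - zstar⟫_ℝ
      + γ ^ 2 * ‖G w - G z‖ ^ 2 - ‖z - w‖ ^ 2 := by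
    rw [h3, h2, h1]
    generalize w - zstar = a
    generalize G w = q
    generalize G z = p
    simp only [← real_inner_self_eq_norm_sq, inner_sub_left, inner_sub_right, inner_add_left,
      inner_add_right, real_inner_smul_left, real_inner_smul_right]
    rw [real_inner_comm a q, real_inner_comm a p, real_inner_comm p q]
    ring
  rw [inner_sub_left] at hM
  rw [key]
  linarith
end

section
/- Let E = ℝ^d with the Euclidean norm, let γ > 0, L > 0, and for each t ∈ ℕ let G_t : E → E be an L-Lipschitz operator. Let the sequences (z_t) and (w_t) in E satisfy w_t = z_t - γ G_t(z_t) and z_{t+1} = z_t - γ G_t(w_t) for all t. Then for every 𝒯 ∈ ℕ and every t ≥ 𝒯, ‖w_t - w_{t-𝒯}‖ ≤ Σ_{k=0}^{𝒯} (1 + γL) ‖w_{t-k} - z_{t-k}‖. -/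
/-- Lemma 2 (step-back lemma) for the Extrapolated Gradient Method. -/
theorem extragradient_step_back
    (d : ℕ) (γ L : ℝ) (hγ : 0 < γ) (hL : 0 < L)
    (G : ℕ → EuclideanSpace ℝ (Fin d) → EuclideanSpace ℝ (Fin d))
    (hLip : ∀ (t : ℕ) (z' z'' : EuclideanSpace ℝ (Fin d)),
      ‖G t z' - G t z''‖ ≤ L * ‖z' - z''‖)
    (z w : ℕ → EuclideanSpace ℝ (Fin d))
    (hw : ∀ t, w t = z t - γ • G t (z t))
    (hz : ∀ t, z (t + 1) = z t - γ • G t (w t))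
    (T t : ℕ) (ht : T ≤ t) :
    ‖w t - w (t - T)‖ ≤
      ∑ k ∈ Finset.range (T + 1), (1 + γ * L) * ‖w (t - k) - z (t - k)‖ := by
  have step : ∀ s, ‖w (s + 1) - w s‖ ≤
      ‖w (s + 1) - z (s + 1)‖ + γ * L * ‖w s - z s‖ := by
    intro s
    have h1 : w (s + 1) - w s = (w (s + 1) - z (s + 1)) + (z (s + 1) - w s) := by abel
    have h2 : z (s + 1) - w s = γ • (G s (z s) - G s (w s)) := by
      rw [hz s, smul_sub]
      nth_rewrite 2 [hw s]
      abel
    have h3 : ‖z (s + 1) - w s‖ ≤ γ * L * ‖w s - z s‖ := by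
      rw [h2, norm_smul, Real.norm_of_nonneg hγ.le, mul_assoc, norm_sub_rev (w s)]
      exact mul_le_mul_of_nonneg_left (hLip s _ _) hγ.le
    rw [h1]
    exact (norm_add_le _ _).trans (by linarith)
  have key : ∀ T, T ≤ t → ‖w t - w (t - T)‖ ≤
      ∑ k ∈ Finset.range T, (1 + γ * L) * ‖w (t - k) - z (t - k)‖
        + γ * L * ‖w (t - T) - z (t - T)‖ := by
    intro T
    induction T with
    | zero =>
      intro _
      simp only [Nat.sub_zero, sub_self, norm_zero, Finset.range_zero, Finset.sum_empty]
      positivity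
    | succ T ih =>
      intro h
      have ih' := ih (by omega)
      have hs := step (t - (T + 1))
      have e : t - (T + 1) + 1 = t - T := by omega
      rw [e] at hs
      have tri := norm_sub_le_norm_sub_add_norm_sub (w t) (w (t - T)) (w (t - (T + 1)))
      rw [Finset.sum_range_succ]
      linarith
  have hk := key T ht
  rw [Finset.sum_range_succ]
  have := norm_nonneg (w (t - T) - z (t - T))
  linarith
end

section
/- Let E = ℝ^d with the Euclidean inner product and norm, let γ > 0, L > 0, μ > 0, σ* ≥ 0, β₁ > 0, and for each t ∈ ℕ let G_t : E → E be an L-Lipschitz and μ-strongly monotone operator with ‖G_t(z*)‖ ≤ σ* for a fixed point z* ∈ E. Let the sequences (z_t) and (w_t) in E satisfy w_t = z_t - γ G_t(z_t) and z_{t+1} = z_t - γ G_t(w_t) for all t. Then for every τ ∈ ℕ and every t ≥ τ, ‖z_{t+1} - z*‖² ≤ ‖z_t - z*‖² - 2γμ‖w_t - z*‖² - 2γ⟨G_t(z*), w_{t-τ} - z*⟩ + (γ/β₁)·σ*² + γ(1+γL)²β₁·(Σ_{k=0}^{τ} ‖w_{t-k} - z_{t-k}‖)² + γ²L²‖w_t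 - z_t‖² - ‖w_t - z_t‖². -/
open InnerProductSpace

/-- Combined per-iteration bound from the proof of Theorem 1 (before taking
expectations). -/
theorem extragradient_per_iteration_bound
    (d : ℕ) (γ L μ σstar β₁ : ℝ)
    (hγ : 0 < γ) (hL : 0 < L) (hμ : 0 < μ) (hσ : 0 ≤ σstar) (hβ₁ : 0 < β₁)
    (G : ℕ → EuclideanSpace ℝ (Fin d) → EuclideanSpace ℝ (Fin d))
    (zstar : EuclideanSpace ℝ (Fin d))
    (hLip : ∀ (t : ℕ) (z' z'' : EuclideanSpace ℝ (Fin d)),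
      ‖G t z' - G t z''‖ ≤ L * ‖z' - z''‖)
    (hMon : ∀ (t : ℕ) (z' z'' : EuclideanSpace ℝ (Fin d)),
      μ * ‖z' - z''‖ ^ 2 ≤ ⟪G t z' - G t z'', z' - z''⟫_ℝ)
    (hbound : ∀ t : ℕ, ‖G t zstar‖ ≤ σstar)
    (z w : ℕ → EuclideanSpace ℝ (Fin d))
    (hw : ∀ t, w t = z t - γ • G t (z t))
    (hz : ∀ t, z (t + 1) = z t - γ • G t (w t))
    (τ t : ℕ) (ht : τ ≤ t) :
    ‖z (t + 1) - zstar‖ ^ 2 ≤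
      ‖z t - zstar‖ ^ 2 - 2 * γ * μ * ‖w t - zstar‖ ^ 2
        - 2 * γ * ⟪G t zstar, w (t - τ) - zstar⟫_ℝ
        + (γ / β₁) * σstar ^ 2
        + γ * (1 + γ * L) ^ 2 * β₁ *
            (∑ k ∈ Finset.range (τ + 1), ‖w (t - k) - z (t - k)‖) ^ 2
        + γ ^ 2 * L ^ 2 * ‖w t - z t‖ ^ 2 - ‖w t - z t‖ ^ 2 := by
  have hdrift : ∀ s, ‖z (s + 1) - w s‖ ≤ γ * L * ‖w s - z s‖ := by
    intro s
    have h1 : z (s + 1) - w s = -(γ • (G s (w s) - G s (z s))) := by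
      have h0 : γ • G s (z s) = z s - w s := by
        rw [eq_sub_iff_add_eq, add_comm, ← eq_sub_iff_add_eq]
        exact hw s
      rw [hz s, smul_sub, h0]
      abel
    rw [h1, norm_neg, norm_smul, Real.norm_of_nonneg hγ.le, mul_assoc]
    exact mul_le_mul_of_nonneg_left (hLip s _ _) hγ.le
  have hsum : ∀ n, n ≤ t → ‖w t - w (t - n)‖ ≤
      (1 + γ * L) * (∑ k ∈ Finset.range (n + 1), ‖w (t - k) - z (t - k)‖)
        - ‖w (t - n) - z (t - n)‖ := by
    intro n
    induction n with
    | zero =>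
      intro _
      simp only [Nat.sub_zero, sub_self, norm_zero, zero_add, Finset.sum_range_one]
      have : 0 ≤ γ * L * ‖w t - z t‖ := by positivity
      linarith
    | succ n ih =>
      intro hn
      have h := ih (by omega)
      rw [Finset.sum_range_succ]
      obtain ⟨s, hs⟩ : ∃ s, s = t - (n + 1) := ⟨_, rfl⟩
      have hs' : t - n = s + 1 := by omega
      rw [← hs]
      rw [hs'] at h
      have h1 := hdrift s
      have h2 : w t - w s = (w t - w (s + 1)) + (w (s + 1) - z (s + 1)) + (z (s + 1) - w s) := by
        abel
      have h3 := norm_add₃_le (a := w t - w (s + 1)) (b := w (s + 1) - z (s + 1))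
        (c := z (s + 1) - w s)
      rw [← h2] at h3
      linarith
  have hS := hsum τ ht
  set S := ∑ k ∈ Finset.range (τ + 1), ‖w (t - k) - z (t - k)‖ with hSdef
  have hD : ‖w t - w (t - τ)‖ ≤ (1 + γ * L) * S := by
    linarith [norm_nonneg (w (t - τ) - z (t - τ))]
  have hD2 : ‖w t - w (t - τ)‖ ^ 2 ≤ ((1 + γ * L) * S) ^ 2 :=
    pow_le_pow_left₀ (norm_nonneg _) hD 2
  have hwz : w t - z t = -(γ • G t (z t)) := by
    conv_lhs => rw [hw t]
    abel
  -- descent identity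
  have hid : ‖z (t + 1) - zstar‖ ^ 2 = ‖z t - zstar‖ ^ 2
      - 2 * γ * ⟪G t (w t), w t - zstar⟫_ℝ
      + γ ^ 2 * ‖G t (w t) - G t (z t)‖ ^ 2 - ‖w t - z t‖ ^ 2 := by
    have e1 : z (t + 1) - zstar = (z t - zstar) - γ • G t (w t) := by
      rw [hz t]; abel
    have e2 : w t - zstar = (z t - zstar) - γ • G t (z t) := by
      conv_lhs => rw [hw t]
      abel
    rw [e1, e2, hwz, norm_neg]
    generalize G t (w t) = g
    generalize z t - zstar = u
    rw [norm_sub_sq_real, norm_sub_sq_real, inner_sub_right, inner_smul_right, inner_smul_right,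
      norm_smul, norm_smul, Real.norm_of_nonneg hγ.le, real_inner_comm g u]
    ring
  have hl : ‖G t (w t) - G t (z t)‖ ^ 2 ≤ (L * ‖w t - z t‖) ^ 2 :=
    pow_le_pow_left₀ (norm_nonneg _) (hLip t _ _) 2
  have hl' := mul_le_mul_of_nonneg_left hl (sq_nonneg γ)
  have hm := hMon t (w t) zstar
  rw [inner_sub_left] at hm
  have hm' := mul_le_mul_of_nonneg_left hm hγ.le
  have hsplit : ⟪G t zstar, w t - zstar⟫_ℝ = ⟪G t zstar, w (t - τ) - zstar⟫_ℝ
      + ⟪G t zstar, w t - w (t - τ)⟫_ℝ := by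
    rw [← inner_add_right]; congr 1; abel
  have hcs : -⟪G t zstar, w t - w (t - τ)⟫_ℝ ≤ σstar * ‖w t - w (t - τ)‖ := by
    have h1 := abs_real_inner_le_norm (G t zstar) (w t - w (t - τ))
    have h2 := mul_le_mul_of_nonneg_right (hbound t) (norm_nonneg (w t - w (t - τ)))
    linarith [neg_abs_le ⟪G t zstar, w t - w (t - τ)⟫_ℝ]
  have hy : 2 * (σstar * ‖w t - w (t - τ)‖) ≤ σstar ^ 2 / β₁ + β₁ * ‖w t - w (t - τ)‖ ^ 2 := by
    have h0 : 0 ≤ (σstar - β₁ * ‖w t - w (t - τ)‖) ^ 2 / β₁ := by positivity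
    have h1 : (σstar - β₁ * ‖w t - w (t - τ)‖) ^ 2 / β₁ = σstar ^ 2 / β₁
        + β₁ * ‖w t - w (t - τ)‖ ^ 2 - 2 * (σstar * ‖w t - w (t - τ)‖) := by
      field_simp
      ring
    linarith
  have hD3 := mul_le_mul_of_nonneg_left hD2 hβ₁.le
  have hfin : -2 * ⟪G t zstar, w t - w (t - τ)⟫_ℝ ≤
      σstar ^ 2 / β₁ + β₁ * ((1 + γ * L) * S) ^ 2 := by linarith
  have hfin' := mul_le_mul_of_nonneg_left hfin hγ.le
  have e : γ / β₁ * σstar ^ 2 = γ * (σstar ^ 2 / β₁) := by ring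
  rw [hsplit] at hm'
  rw [hid, e]
  linarith
end
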